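/- arXiv:1802.07236 — 5 statements merged into one kernel-verified Lean document; each statement's English description precedes it below -/
import Mathlib

section
/- Let a > 0 and B ∈ ℝ. Let (b_n), (c_n) be sequences of real numbers with b_n → +∞, c_n → +∞ and c_n − b_n → B, and let θ_n ∈ [0, π] be angles satisfying the hyperbolic law of cosines cosh(c_n) = cosh(a)·cosh(b_n) − sinh(a)·sinh(b_n)·cos(θ_n) for every n. Then cos(θ_n) converges to (cosh(a) − e^B)/sinh(a); consequently the sequence (θ_n) converges to a limit θ ∈ [0, π] satisfying e^B = cosh(a) − sinh(a)·cos(θ). -/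
open Filter Topology Real

/-- Let `a > 0` and `B ∈ ℝ`. Let `b n`, `c n` be sequences of reals tending to
`+∞` with `c n - b n → B`, and let `θ n ∈ [0, π]` satisfy the hyperbolic law of cosines
`cosh (c n) = cosh a * cosh (b n) - sinh a * sinh (b n) * cos (θ n)` for every `n`. Then
`cos (θ n)` converges to `(cosh a - exp B) / sinh a`; consequently `θ n` converges to a limit
`θ' ∈ [0, π]` satisfying `exp B = cosh a - sinh a * cos θ'`. -/
theorem busemann_comparison_angle_limit
    (a B : ℝ) (ha : 0 < a) (b c θ : ℕ → ℝ)
    (hb : Tendsto b atTop atTop) (hc : Tendsto c atTop atTop)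
    (hcb : Tendsto (fun n => c n - b n) atTop (𝓝 B))
    (hθ : ∀ n, θ n ∈ Set.Icc 0 Real.pi)
    (hlaw : ∀ n, Real.cosh (c n) =
      Real.cosh a * Real.cosh (b n) - Real.sinh a * Real.sinh (b n) * Real.cos (θ n)) :
    Tendsto (fun n => Real.cos (θ n)) atTop
        (𝓝 ((Real.cosh a - Real.exp B) / Real.sinh a)) ∧
    ∃ θ' ∈ Set.Icc 0 Real.pi,
      Tendsto θ atTop (𝓝 θ') ∧ Real.exp B = Real.cosh a - Real.sinh a * Real.cos θ' := by
  have hs : 0 < Real.sinh a := Real.sinh_pos_iff.mpr ha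
  have hu : Tendsto (fun n => Real.exp (-b n)) atTop (𝓝 0) :=
    Real.tendsto_exp_neg_atTop_nhds_zero.comp hb
  have hv : Tendsto (fun n => Real.exp (-c n)) atTop (𝓝 0) :=
    Real.tendsto_exp_neg_atTop_nhds_zero.comp hc
  have hw : Tendsto (fun n => Real.exp (c n - b n)) atTop (𝓝 (Real.exp B)) :=
    (Real.continuous_exp.tendsto B).comp hcb
  have hcos : Tendsto (fun n => Real.cos (θ n)) atTop
      (𝓝 ((Real.cosh a - Real.exp B) / Real.sinh a)) := by
    have hlim : Tendsto (fun n => (Real.cosh a * (1 + Real.exp (-b n) ^ 2)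
        - (Real.exp (c n - b n) + Real.exp (-c n) * Real.exp (-b n)))
        / (Real.sinh a * (1 - Real.exp (-b n) ^ 2))) atTop
        (𝓝 ((Real.cosh a * (1 + 0 ^ 2) - (Real.exp B + 0 * 0))
          / (Real.sinh a * (1 - 0 ^ 2)))) := by
      refine Tendsto.div ?_ ?_ (by simpa using hs.ne')
      · exact (((hu.pow 2).const_add 1).const_mul _).sub (hw.add (hv.mul hu))
      · exact ((hu.pow 2).const_sub 1).const_mul _
    have e : (Real.cosh a * (1 + 0 ^ 2) - (Real.exp B + 0 * 0))
          / (Real.sinh a * (1 - 0 ^ 2)) = (Real.cosh a - Real.exp B) / Real.sinh a := by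
      norm_num
    rw [e] at hlim
    refine hlim.congr' ?_
    filter_upwards [hb.eventually_gt_atTop 0] with n hn
    have h1 : Real.exp (-b n) < 1 := Real.exp_lt_one_iff.mpr (by linarith)
    have h0 := Real.exp_pos (-b n)
    have h2 : 0 < 1 - Real.exp (-b n) ^ 2 := by nlinarith
    rw [div_eq_iff (mul_pos hs h2).ne']
    have hl := hlaw n
    rw [Real.cosh_eq (c n), Real.cosh_eq (b n), Real.sinh_eq (b n)] at hl
    have hbb : Real.exp (b n) * Real.exp (-b n) = 1 := by
      rw [← Real.exp_add]; simp
    have hcb' : Real.exp (c n - b n) = Real.exp (c n) * Real.exp (-b n) := by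
      rw [← Real.exp_add, sub_eq_add_neg]
    rw [hcb']
    linear_combination (-2 * Real.exp (-b n)) * hl
      - (Real.cosh a - Real.sinh a * Real.cos (θ n)) * hbb
  refine ⟨hcos, Real.arccos ((Real.cosh a - Real.exp B) / Real.sinh a),
    ⟨Real.arccos_nonneg _, Real.arccos_le_pi _⟩, ?_⟩
  have ht : Tendsto θ atTop
      (𝓝 (Real.arccos ((Real.cosh a - Real.exp B) / Real.sinh a))) := by
    refine ((Real.continuous_arccos.tendsto _).comp hcos).congr fun n => ?_
    exact Real.arccos_cos (hθ n).1 (hθ n).2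
  refine ⟨ht, ?_⟩
  have hq := tendsto_nhds_unique ((Real.continuous_cos.tendsto _).comp ht) hcos
  rw [hq]
  field_simp
  ring
end

section
/- Let f : ℝ → ℝ be a trigonometric polynomial, i.e. f(r) = ∑_{j=1}^k (a_j cos(β_j r) + b_j sin(β_j r)) for some real numbers a_j, b_j, β_j. If f(r) → 0 as r → +∞, then f is identically zero. -/
open Filter Topology

/-- Let `f : ℝ → ℝ` be a trigonometric polynomial, i.e.
`f r = ∑ j, (a j * cos (β j * r) + b j * sin (β j * r))` for some reals `a j`, `b j`, `β j`.
If `f r → 0` as `r → +∞`, then `f` is identically zero. -/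
theorem trigPoly_tendsto_zero_eq_zero
    (f : ℝ → ℝ) (k : ℕ) (a b β : Fin k → ℝ)
    (hf : ∀ r, f r = ∑ j, (a j * Real.cos (β j * r) + b j * Real.sin (β j * r)))
    (hlim : Tendsto f atTop (𝓝 0)) :
    ∀ r, f r = 0 := by
  intro r
  obtain ⟨L, φ, hφ, hL⟩ := CompactSpace.tendsto_subseq
    (fun n : ℕ => fun j : Fin k => Circle.exp (β j * (n : ℝ)))
  -- the return times `t n → ∞`, along which all frequencies come back to `1`
  let t : ℕ → ℝ := fun n => (φ (φ n + n) : ℝ) - (φ n : ℝ)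
  have ht : ∀ n : ℕ, (n : ℝ) ≤ t n := by
    intro n
    have h := hφ.le_apply (x := φ n + n)
    have h' : ((φ n + n : ℕ) : ℝ) ≤ (φ (φ n + n) : ℝ) := by exact_mod_cast h
    push_cast at h'
    simp only [t]
    linarith
  have htop : Tendsto (fun n => r + t n) atTop atTop :=
    tendsto_atTop_add_const_left _ r
      (tendsto_atTop_mono ht tendsto_natCast_atTop_atTop)
  have hψ : Tendsto (fun n => φ n + n) atTop atTop :=
    tendsto_atTop_mono (fun n => Nat.le_add_left n (φ n)) tendsto_id
  have hexp : ∀ j, Tendsto (fun n => Circle.exp (β j * (r + t n))) atTop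
      (𝓝 (Circle.exp (β j * r))) := by
    intro j
    have h1 := (tendsto_pi_nhds.1 hL) j
    have h2 := h1.comp hψ
    have h3 := (h2.div' h1).const_mul (Circle.exp (β j * r))
    rw [div_self', mul_one] at h3
    refine h3.congr fun n => ?_
    simp only [Function.comp_apply, t]
    rw [← Circle.exp_sub, ← Circle.exp_add]
    congr 1
    ring
  have hcoe : ∀ j, Tendsto (fun n => (Circle.exp (β j * (r + t n)) : ℂ)) atTop
      (𝓝 (Circle.exp (β j * r) : ℂ)) := fun j =>
    (continuous_subtype_val.tendsto _).comp (hexp j)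
  have hcos : ∀ j, Tendsto (fun n => Real.cos (β j * (r + t n))) atTop
      (𝓝 (Real.cos (β j * r))) := by
    intro j
    have h := (Complex.continuous_re.tendsto _).comp (hcoe j)
    simpa [Function.comp_def, Circle.coe_exp, Complex.exp_ofReal_mul_I_re,
      -Complex.ofReal_mul, -Complex.ofReal_add] using h
  have hsin : ∀ j, Tendsto (fun n => Real.sin (β j * (r + t n))) atTop
      (𝓝 (Real.sin (β j * r))) := by
    intro j
    have h := (Complex.continuous_im.tendsto _).comp (hcoe j)
    simpa [Function.comp_def, Circle.coe_exp, Complex.exp_ofReal_mul_I_im,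
      -Complex.ofReal_mul, -Complex.ofReal_add] using h
  have hlim1 : Tendsto (fun n => f (r + t n)) atTop (𝓝 (f r)) := by
    simp only [hf]
    exact tendsto_finsetSum _ fun j _ =>
      ((hcos j).const_mul (a j)).add ((hsin j).const_mul (b j))
  exact tendsto_nhds_unique hlim1 (hlim.comp htop)
end

section
/- Let ρ > 0, C₀ > 0, and let P : ℝ → ℝ be an exponential polynomial of exponential degree δ < 2ρ. Set A(r) = C₀·e^{2ρr} + P(r), and suppose A is positive on [r₀, ∞) for some r₀ > 0. Then there exist constants α > 0, M > 0 and R ≥ r₀ such that for all r ≥ R, |A'(r)/A(r) − 2ρ| ≤ M·e^{−αr} and |(A'/A)'(r)| ≤ M·e^{−αr}. -/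
open Filter Topology

/-- An *exponential polynomial* is a function of the form
`A r = ∑ i, (pᵢ(r) cos (βᵢ r) + qᵢ(r) sin (βᵢ r)) * exp (αᵢ r)`
where `pᵢ, qᵢ` are real polynomials and `αᵢ, βᵢ ∈ ℝ`. -/
def IsExpPoly (A : ℝ → ℝ) : Prop :=
  ∃ (k : ℕ) (p q : Fin k → Polynomial ℝ) (α β : Fin k → ℝ),
    ∀ r, A r = ∑ i,
      ((p i).eval r * Real.cos (β i * r) + (q i).eval r * Real.sin (β i * r)) * Real.exp (α i * r)

/-- A function `P` has *exponential degree* `δ` if `P r * exp (-s*r) → 0` as `r → +∞` for every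
`s > δ`, and this fails for every `s < δ`. -/
def HasExpDegree (P : ℝ → ℝ) (δ : ℝ) : Prop :=
  (∀ s, δ < s → Tendsto (fun r => P r * Real.exp (-s * r)) atTop (𝓝 0)) ∧
  (∀ s, s < δ → ¬ Tendsto (fun r => P r * Real.exp (-s * r)) atTop (𝓝 0))

/-- The linear map sending coefficient polynomials of degree `< N` to the exponential polynomial
with frequencies `α`, `β`. -/
noncomputable def expPolyMap {k : ℕ} (N : ℕ) (α β : Fin k → ℝ) :
    (Fin k → (Polynomial.degreeLT ℝ N × Polynomial.degreeLT ℝ N)) →ₗ[ℝ] (ℝ → ℝ) where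
  toFun c := fun r => ∑ i, (((c i).1 : Polynomial ℝ).eval r * Real.cos (β i * r)
    + ((c i).2 : Polynomial ℝ).eval r * Real.sin (β i * r)) * Real.exp (α i * r)
  map_add' c d := by
    funext r
    simp only [Pi.add_apply, Prod.fst_add, Prod.snd_add, Submodule.coe_add, Polynomial.eval_add,
      ← Finset.sum_add_distrib]
    exact Finset.sum_congr rfl fun i _ => by ring
  map_smul' a c := by
    funext r
    simp only [Pi.smul_apply, Prod.smul_fst, Prod.smul_snd, Submodule.coe_smul,
      Polynomial.eval_smul, RingHom.id_apply, smul_eq_mul, Finset.mul_sum]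
    exact Finset.sum_congr rfl fun i _ => by ring

/-- Translates of elements of the range are in the range. -/
lemma expPolyMap_translate {k : ℕ} (N : ℕ) (α β : Fin k → ℝ) (f : ℝ → ℝ)
    (hf : f ∈ LinearMap.range (expPolyMap N α β)) (t : ℝ) :
    (fun r => f (r + t)) ∈ LinearMap.range (expPolyMap N α β) := by
  obtain ⟨c, rfl⟩ := hf
  have hT : ∀ p : Polynomial.degreeLT ℝ N,
      Polynomial.taylor t (p : Polynomial ℝ) ∈ Polynomial.degreeLT ℝ N := by
    intro p
    have hp := p.2
    rw [Polynomial.mem_degreeLT] at hp ⊢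
    rwa [Polynomial.degree_taylor]
  refine ⟨fun i =>
    (Real.exp (α i * t) • (Real.cos (β i * t) • ⟨_, hT (c i).1⟩
        + Real.sin (β i * t) • ⟨_, hT (c i).2⟩),
     Real.exp (α i * t) • (Real.cos (β i * t) • ⟨_, hT (c i).2⟩
        - Real.sin (β i * t) • ⟨_, hT (c i).1⟩)), ?_⟩
  funext r
  simp only [expPolyMap, LinearMap.coe_mk, AddHom.coe_mk, Submodule.coe_smul, Submodule.coe_add,
    Submodule.coe_sub, Polynomial.eval_smul, Polynomial.eval_add, Polynomial.eval_sub,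
    smul_eq_mul, Polynomial.taylor_eval, mul_add, Real.exp_add, Real.cos_add, Real.sin_add]
  exact Finset.sum_congr rfl fun i _ => by ring

lemma expPolyMap_differentiable {k : ℕ} (N : ℕ) (α β : Fin k → ℝ) (f : ℝ → ℝ)
    (hf : f ∈ LinearMap.range (expPolyMap N α β)) : Differentiable ℝ f := by
  obtain ⟨c, rfl⟩ := hf
  simp only [expPolyMap, LinearMap.coe_mk, AddHom.coe_mk]
  fun_prop

/-- In a finite dimensional translation invariant space of differentiable functions, the
derivative is a finite linear combination of translates. -/
lemma deriv_eq_sum_translates (V : Submodule ℝ (ℝ → ℝ)) [FiniteDimensional ℝ V]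
    (htr : ∀ f ∈ V, ∀ t : ℝ, (fun r => f (r + t)) ∈ V)
    (hd : ∀ f ∈ V, Differentiable ℝ f) :
    ∃ c : ℝ →₀ ℝ, ∀ f ∈ V, ∀ r, deriv f r = c.sum fun t a => a * f (r + t) := by
  let D : V →ₗ[ℝ] ℝ :=
    { toFun := fun f => deriv (f : ℝ → ℝ) 0
      map_add' := fun f g => by
        rw [Submodule.coe_add, deriv_add (hd _ f.2 0) (hd _ g.2 0)]
      map_smul' := fun a f => by
        rw [Submodule.coe_smul, deriv_const_smul _ (hd _ f.2 0)]
        rfl }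
  let L : ℝ → V →ₗ[ℝ] ℝ := fun t => (LinearMap.proj t).comp V.subtype
  have hmem : D ∈ Submodule.span ℝ (Set.range L) := by
    apply FiniteDimensional.mem_span_of_iInf_ker_le_ker
    intro f hf
    have hz : (f : ℝ → ℝ) = 0 := by
      funext t
      have := (Submodule.mem_iInf _).1 hf t
      simpa [L] using this
    have : f = 0 := Subtype.ext hz
    simp [this]
  obtain ⟨c, hc⟩ := Finsupp.mem_span_range_iff_exists_finsupp.1 hmem
  refine ⟨c, fun f hf r => ?_⟩
  have h1 := congrArg (fun T : V →ₗ[ℝ] ℝ => T ⟨_, htr f hf r⟩) hc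
  have h2 : D ⟨_, htr f hf r⟩ = deriv f r := by
    change deriv (fun x => f (x + r)) 0 = _
    rw [deriv_comp_add_const, zero_add]
  rw [← h2, ← hc]
  simp [Finsupp.sum, L, add_comm]

lemma tendsto_sum_translates (c : ℝ →₀ ℝ) (f g : ℝ → ℝ) (s : ℝ)
    (hg : ∀ r, g r = c.sum fun t a => a * f (r + t))
    (hf : Tendsto (fun r => f r * Real.exp (-s * r)) atTop (𝓝 0)) :
    Tendsto (fun r => g r * Real.exp (-s * r)) atTop (𝓝 0) := by
  have h : ∀ r, g r * Real.exp (-s * r) = ∑ t ∈ c.support,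
      (c t * Real.exp (s * t)) * (f (r + t) * Real.exp (-s * (r + t))) := by
    intro r
    rw [hg, Finsupp.sum, Finset.sum_mul]
    refine Finset.sum_congr rfl fun t _ => ?_
    have : Real.exp (-s * r) = Real.exp (s * t) * Real.exp (-s * (r + t)) := by
      rw [← Real.exp_add]; congr 1; ring
    rw [this]; ring
  simp only [h]
  have : (0 : ℝ) = ∑ t ∈ c.support, (c t * Real.exp (s * t)) * 0 := by simp
  rw [this]
  refine tendsto_finsetSum _ fun t _ => Tendsto.const_mul _ ?_
  exact hf.comp (tendsto_atTop_add_const_right _ t tendsto_id)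

/-- Derivatives of exponential polynomials inherit decay. -/
lemma IsExpPoly.deriv_decay {P : ℝ → ℝ} (hP : IsExpPoly P) :
    Differentiable ℝ P ∧ Differentiable ℝ (deriv P) ∧
    ∀ s, Tendsto (fun r => P r * Real.exp (-s * r)) atTop (𝓝 0) →
      Tendsto (fun r => deriv P r * Real.exp (-s * r)) atTop (𝓝 0) ∧
      Tendsto (fun r => deriv (deriv P) r * Real.exp (-s * r)) atTop (𝓝 0) := by
  obtain ⟨k, p, q, α, β, h⟩ := hP
  let N : ℕ := ∑ i, ((p i).natDegree + (q i).natDegree) + 1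
  have hN : ∀ i, (p i).natDegree + (q i).natDegree < N := fun i =>
    Nat.lt_succ_of_le (Finset.single_le_sum
      (f := fun i => (p i).natDegree + (q i).natDegree) (fun _ _ => Nat.zero_le _)
      (Finset.mem_univ i))
  have hlt : ∀ a : Polynomial ℝ, a.natDegree < N → a ∈ Polynomial.degreeLT ℝ N := by
    intro a ha
    rw [Polynomial.mem_degreeLT]
    exact lt_of_le_of_lt Polynomial.degree_le_natDegree (by exact_mod_cast ha)
  let V := LinearMap.range (expPolyMap N α β)
  have hPV : P ∈ V := by
    refine ⟨fun i => (⟨p i, hlt _ (by have := hN i; omega)⟩,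
      ⟨q i, hlt _ (by have := hN i; omega)⟩), ?_⟩
    funext r
    rw [h]
    rfl
  have htr : ∀ f ∈ V, ∀ t : ℝ, (fun r => f (r + t)) ∈ V := expPolyMap_translate N α β
  have hd : ∀ f ∈ V, Differentiable ℝ f := expPolyMap_differentiable N α β
  obtain ⟨c, hc⟩ := deriv_eq_sum_translates V htr hd
  have hP' : deriv P ∈ V := by
    have : deriv P = ∑ t ∈ c.support, c t • (fun r => P (r + t)) := by
      funext r
      rw [hc P hPV r]
      simp [Finsupp.sum]
    rw [this]
    exact V.sum_mem fun t _ => V.smul_mem _ (htr P hPV t)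
  refine ⟨hd _ hPV, hd _ hP', fun s hs => ?_⟩
  have h1 := tendsto_sum_translates c P (deriv P) s (hc P hPV) hs
  exact ⟨h1, tendsto_sum_translates c (deriv P) _ s (hc _ hP') h1⟩

lemma eventually_abs_le_exp (f : ℝ → ℝ) (s : ℝ)
    (hf : Tendsto (fun r => f r * Real.exp (-s * r)) atTop (𝓝 0)) :
    ∀ᶠ r in atTop, |f r| ≤ Real.exp (s * r) := by
  have := hf.abs.eventually_le_const (u := 1) (by simp)
  filter_upwards [this] with r hr
  rw [abs_mul, Real.abs_exp, neg_mul, Real.exp_neg] at hr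
  have he := Real.exp_pos (s * r)
  rw [← div_eq_mul_inv, div_le_one he] at hr
  exact hr

/-- Let `ρ > 0`, `C₀ > 0`, and let `P` be an exponential polynomial of
exponential degree `δ < 2ρ`. Set `A r = C₀ * exp (2ρr) + P r` and suppose `A` is positive on
`[r₀, ∞)` for some `r₀ > 0`. Then there are constants `α > 0`, `M > 0` and `R ≥ r₀` such that
for all `r ≥ R`, `|A' r / A r - 2ρ| ≤ M * exp (-αr)` and `|(A'/A)' r| ≤ M * exp (-αr)`. -/
theorem meanCurvature_exponential_decay
    (ρ C₀ : ℝ) (hρ : 0 < ρ) (hC₀ : 0 < C₀)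
    (P : ℝ → ℝ) (δ : ℝ) (hP : IsExpPoly P) (hdeg : HasExpDegree P δ) (hδ : δ < 2 * ρ)
    (A : ℝ → ℝ) (hA : ∀ r, A r = C₀ * Real.exp (2 * ρ * r) + P r)
    (r₀ : ℝ) (hr₀ : 0 < r₀) (hpos : ∀ r ≥ r₀, 0 < A r) :
    ∃ α > (0 : ℝ), ∃ M > (0 : ℝ), ∃ R ≥ r₀, ∀ r ≥ R,
      |deriv A r / A r - 2 * ρ| ≤ M * Real.exp (-α * r) ∧
      |deriv (fun s => deriv A s / A s) r| ≤ M * Real.exp (-α * r) := by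
  obtain ⟨hd0, hd1, hdec⟩ := hP.deriv_decay
  obtain ⟨s, hs1, hs2⟩ := exists_between hδ
  have ht0 := hdeg.1 s hs1
  obtain ⟨ht1, ht2⟩ := hdec s ht0
  have hE : Tendsto (fun r : ℝ => Real.exp (-(2 * ρ - s) * r)) atTop (𝓝 0) := by
    apply Real.tendsto_exp_atBot.comp
    exact tendsto_id.const_mul_atTop_of_neg (by linarith)
  have hEv := hE.eventually_le_const (u := C₀ / 2) (by positivity)
  obtain ⟨R, hR⟩ := eventually_atTop.1 ((eventually_abs_le_exp _ s ht0).and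
    ((eventually_abs_le_exp _ s ht1).and ((eventually_abs_le_exp _ s ht2).and hEv)))
  have hEd : ∀ r, HasDerivAt (fun r => Real.exp (2 * ρ * r)) (2 * ρ * Real.exp (2 * ρ * r)) r := by
    intro r
    have := ((hasDerivAt_id r).const_mul (2 * ρ)).exp
    simpa [mul_comm] using this
  have hAd : ∀ r, HasDerivAt A (C₀ * (2 * ρ * Real.exp (2 * ρ * r)) + deriv P r) r := by
    intro r
    rw [funext hA]
    exact ((hEd r).const_mul C₀).add (hd0 r).hasDerivAt
  have hA1 : deriv A = fun r => C₀ * (2 * ρ * Real.exp (2 * ρ * r)) + deriv P r :=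
    funext fun r => (hAd r).deriv
  have hAd2 : ∀ r, HasDerivAt (deriv A)
      (C₀ * (2 * ρ * (2 * ρ * Real.exp (2 * ρ * r))) + deriv (deriv P) r) r := by
    intro r
    rw [hA1]
    exact (((hEd r).const_mul (2 * ρ)).const_mul C₀).add (hd1 r).hasDerivAt
  refine ⟨2 * ρ - s, by linarith, (1 + 2 * ρ) * (2 / C₀) * (2 + 2 * (2 * ρ)), by positivity,
    max R r₀, le_max_right _ _, fun r hr => ?_⟩
  obtain ⟨h0, h1, h2, h3⟩ := hR r (le_trans (le_max_left _ _) hr)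
  have hAr := hpos r (le_trans (le_max_right _ _) hr)
  set a := 2 * ρ with ha
  have ha0 : 0 < a := by positivity
  set w := Real.exp (-(a - s) * r) with hw
  have hw0 : 0 < w := Real.exp_pos _
  have hE0 := Real.exp_pos (a * r)
  have hsw : Real.exp (s * r) = w * Real.exp (a * r) := by
    rw [hw, ← Real.exp_add]; congr 1; ring
  have hAlow : C₀ / 2 * Real.exp (a * r) ≤ A r := by
    rw [hA]
    have := neg_abs_le (P r)
    have : w * Real.exp (a * r) ≤ C₀ / 2 * Real.exp (a * r) := by gcongr
    linarith
  have hsA : Real.exp (s * r) ≤ 2 / C₀ * w * A r := by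
    calc Real.exp (s * r) = 2 / C₀ * w * (C₀ / 2 * Real.exp (a * r)) := by
          rw [hsw]; field_simp
      _ ≤ _ := by gcongr
  have hKw : 2 / C₀ * w ≤ 1 := by
    calc 2 / C₀ * w ≤ 2 / C₀ * (C₀ / 2) := by gcongr
      _ = 1 := by field_simp
  set K := 2 / C₀ with hK
  have hK0 : 0 < K := by positivity
  have hKw0 : 0 < K * w := by positivity
  -- generic bound
  have gen : ∀ x y : ℝ, |x| ≤ Real.exp (s * r) → |y| ≤ Real.exp (s * r) →
      |(x - a * y) / A r| ≤ (1 + a) * (K * w) := by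
    intro x y hx hy
    rw [abs_div, abs_of_pos hAr, div_le_iff₀ hAr]
    calc |x - a * y| ≤ |x| + |a * y| := abs_sub _ _
      _ = |x| + a * |y| := by rw [abs_mul, abs_of_pos ha0]
      _ ≤ Real.exp (s * r) + a * Real.exp (s * r) := by gcongr
      _ = (1 + a) * Real.exp (s * r) := by ring
      _ ≤ (1 + a) * (K * w * A r) := by gcongr
      _ = _ := by ring
  have b1 := gen _ _ h1 h0
  have b2 := gen _ _ h2 h1
  have e1 : deriv A r / A r - a = (deriv P r - a * P r) / A r := by
    rw [hA1]
    field_simp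
    rw [hA]; ring
  have hMw : (1 + a) * K * (2 + 2 * a) * w = (1 + a) * (K * w) * (2 + 2 * a) := by ring
  rw [hMw]
  have hpw : 0 < (1 + a) * (K * w) := by positivity
  constructor
  · rw [e1]
    exact b1.trans (le_mul_of_one_le_right hpw.le (by linarith))
  · have e2 : deriv (fun s => deriv A s / A s) r =
        (deriv (deriv P) r - a * deriv P r) / A r
          - (deriv P r - a * P r) / A r * (a + (deriv P r - a * P r) / A r) := by
      refine ((hAd2 r).div (hAd r) hAr.ne').deriv.trans ?_
      rw [hA1]
      have hAr' := hAr.ne'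
      field_simp
      rw [hA]; ring
    rw [e2]
    set u := (deriv P r - a * P r) / A r
    set v := (deriv (deriv P) r - a * deriv P r) / A r
    have hu : |a + u| ≤ a + (1 + a) := by
      calc |a + u| ≤ |a| + |u| := abs_add_le _ _
        _ ≤ a + (1 + a) * (K * w) := by rw [abs_of_pos ha0]; gcongr
        _ ≤ a + (1 + a) * 1 := by gcongr
        _ = _ := by ring
    calc |v - u * (a + u)| ≤ |v| + |u * (a + u)| := abs_sub _ _
      _ = |v| + |u| * |a + u| := by rw [abs_mul]
      _ ≤ (1 + a) * (K * w) + (1 + a) * (K * w) * (a + (1 + a)) := by gcongr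
      _ = _ := by ring
end

section
/- Let ρ > 0, C₀ > 0, and let P : ℝ → ℝ be an exponential polynomial of exponential degree δ < 2ρ. Set A(r) = C₀·e^{2ρr} + P(r), and suppose A is positive on [r₀, ∞) for some r₀ > 0. Define G(r) = (1/4)·(A'(r)/A(r))² + (1/2)·(A'/A)'(r) − ρ². Then there exist α > 0, M > 0 and R ≥ r₀ such that |G(r)| ≤ M·e^{−αr} for all r ≥ R; in particular, G is bounded on [r₀, ∞) and ∫_{r₀}^{∞} r·|G(r)| dr < +∞. -/
open Filter Topology

open Filter Topology Asymptotics

/-- The translates of `f` all lie in a finite-dimensional space of functions. -/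
def FinTrans (f : ℝ → ℝ) : Prop :=
  ∃ W : Submodule ℝ (ℝ → ℝ), W.FG ∧ ∀ h : ℝ, (fun r => f (r + h)) ∈ W

lemma FinTrans.add {f g : ℝ → ℝ} (hf : FinTrans f) (hg : FinTrans g) :
    FinTrans (fun r => f r + g r) := by
  obtain ⟨V, hV, hV'⟩ := hf
  obtain ⟨W, hW, hW'⟩ := hg
  exact ⟨V ⊔ W, hV.sup hW, fun h => Submodule.add_mem_sup (hV' h) (hW' h)⟩

lemma FinTrans.mul {f g : ℝ → ℝ} (hf : FinTrans f) (hg : FinTrans g) :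
    FinTrans (fun r => f r * g r) := by
  obtain ⟨V, hV, hV'⟩ := hf
  obtain ⟨W, hW, hW'⟩ := hg
  exact ⟨V * W, hV.mul hW, fun h => Submodule.mul_mem_mul (hV' h) (hW' h)⟩

lemma FinTrans.of_pair {f u v : ℝ → ℝ}
    (H : ∀ h : ℝ, ∃ a b : ℝ, ∀ r, f (r + h) = a * u r + b * v r) : FinTrans f := by
  refine ⟨Submodule.span ℝ {u, v}, Submodule.fg_span (by simp), fun h => ?_⟩
  obtain ⟨a, b, hab⟩ := H h
  rw [Submodule.mem_span_pair]
  refine ⟨a, b, ?_⟩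
  funext r
  simp [hab r]

lemma FinTrans.const (c : ℝ) : FinTrans (fun _ => c) :=
  FinTrans.of_pair (u := fun _ => 1) (v := fun _ => 1) fun _ => ⟨c, 0, fun r => by simp⟩

lemma FinTrans.id' : FinTrans (fun r => r) :=
  FinTrans.of_pair (u := fun r => r) (v := fun _ => 1) fun h => ⟨1, h, fun r => by simp⟩

lemma FinTrans.poly (p : Polynomial ℝ) : FinTrans (fun r => p.eval r) := by
  induction p using Polynomial.induction_on' with
  | add p q hp hq => simpa using hp.add hq
  | monomial n a =>
    have : FinTrans (fun r : ℝ => r ^ n) := by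
      induction n with
      | zero => simpa using FinTrans.const 1
      | succ n ih => simpa [pow_succ] using ih.mul FinTrans.id'
    simpa using (FinTrans.const a).mul this

lemma FinTrans.cos (b : ℝ) : FinTrans (fun r => Real.cos (b * r)) :=
  FinTrans.of_pair (u := fun r => Real.cos (b * r)) (v := fun r => Real.sin (b * r))
    fun h => ⟨Real.cos (b * h), -Real.sin (b * h), fun r => by
      rw [mul_add, Real.cos_add]; ring⟩

lemma FinTrans.sin (b : ℝ) : FinTrans (fun r => Real.sin (b * r)) :=
  FinTrans.of_pair (u := fun r => Real.cos (b * r)) (v := fun r => Real.sin (b * r))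
    fun h => ⟨Real.sin (b * h), Real.cos (b * h), fun r => by
      rw [mul_add, Real.sin_add]; ring⟩

lemma FinTrans.exp (b : ℝ) : FinTrans (fun r => Real.exp (b * r)) :=
  FinTrans.of_pair (u := fun r => Real.exp (b * r)) (v := fun _ => 1)
    fun h => ⟨Real.exp (b * h), 0, fun r => by
      rw [mul_add, Real.exp_add]; ring⟩

lemma FinTrans.sum {ι : Type} (s : Finset ι) (f : ι → ℝ → ℝ) (hf : ∀ i, FinTrans (f i)) :
    FinTrans (fun r => ∑ i ∈ s, f i r) := by
  classical
  induction s using Finset.induction_on with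
  | empty => simpa using FinTrans.const 0
  | insert a s ha ih => simpa [Finset.sum_insert ha] using (hf a).add ih

lemma IsExpPoly.finTrans {P : ℝ → ℝ} (hP : IsExpPoly P) : FinTrans P := by
  obtain ⟨k, p, q, α, β, h⟩ := hP
  have : P = fun r => ∑ i, ((p i).eval r * Real.cos (β i * r) +
    (q i).eval r * Real.sin (β i * r)) * Real.exp (α i * r) := funext h
  rw [this]
  exact FinTrans.sum _ _ fun i => ((((FinTrans.poly _).mul (FinTrans.cos _)).add
    ((FinTrans.poly _).mul (FinTrans.sin _))).mul (FinTrans.exp _))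

lemma IsExpPoly.contDiff {P : ℝ → ℝ} (hP : IsExpPoly P) (n : ℕ) : ContDiff ℝ n P := by
  obtain ⟨k, p, q, α, β, h⟩ := hP
  have : P = fun r => ∑ i, ((p i).eval r * Real.cos (β i * r) +
    (q i).eval r * Real.sin (β i * r)) * Real.exp (α i * r) := funext h
  rw [this]
  have hp : ∀ p : Polynomial ℝ, ContDiff ℝ n (fun r => p.eval r) := fun p => by simpa using p.contDiff_aeval (𝕜 := ℝ) n
  refine ContDiff.sum fun i _ => ?_
  have h1 := hp (p i)
  have h2 := hp (q i)
  fun_prop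

/-- If all translates of a differentiable `f` lie in a finite-dimensional `W`, so do those
of `f'`. -/
lemma deriv_trans_mem {f : ℝ → ℝ} (hd : Differentiable ℝ f) {W : Submodule ℝ (ℝ → ℝ)}
    (hW : W.FG) (h : ∀ h : ℝ, (fun r => f (r + h)) ∈ W) (t : ℝ) :
    (fun r => deriv f (r + t)) ∈ W := by
  have : FiniteDimensional ℝ W := Module.Finite.iff_fg.mpr hW
  have hcl : IsClosed (W : Set (ℝ → ℝ)) := Submodule.closed_of_finiteDimensional W
  have hlim : Tendsto (fun (e : ℝ) (r : ℝ) => e⁻¹ • (f (r + t + e) - f (r + t))) (𝓝[≠] 0)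
      (𝓝 (fun r => deriv f (r + t))) := by
    rw [tendsto_pi_nhds]
    intro r
    exact (hd (r + t)).hasDerivAt.tendsto_slope_zero
  refine hcl.mem_of_tendsto hlim (Eventually.of_forall fun e => ?_)
  have := W.smul_mem e⁻¹ (W.sub_mem (h (t + e)) (h t))
  have he : (fun r => e⁻¹ • (f (r + t + e) - f (r + t))) =
      e⁻¹ • ((fun r => f (r + (t + e))) - fun r => f (r + t)) := by
    funext r
    simp [add_assoc]
  rw [SetLike.mem_coe, he]
  exact this

lemma FinTrans.deriv {f : ℝ → ℝ} (hd : Differentiable ℝ f) (hf : FinTrans f) :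
    FinTrans (deriv f) := by
  obtain ⟨W, hW, h⟩ := hf
  exact ⟨W, hW, fun t => deriv_trans_mem hd hW h t⟩

lemma FinTrans.deriv_isBigO {f : ℝ → ℝ} (hd : Differentiable ℝ f) (hf : FinTrans f) {s : ℝ}
    (hO : f =O[atTop] fun r => Real.exp (s * r)) :
    _root_.deriv f =O[atTop] fun r => Real.exp (s * r) := by
  obtain ⟨W, hW, h⟩ := hf
  let V : Submodule ℝ (ℝ → ℝ) := Submodule.span ℝ (Set.range fun (h : ℝ) (r : ℝ) => f (r + h))
  have hVW : V ≤ W := Submodule.span_le.2 (by rintro _ ⟨t, rfl⟩; exact h t)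
  have : FiniteDimensional ℝ W := Module.Finite.iff_fg.mpr hW
  have hV : V.FG := Module.Finite.iff_fg.mp (Submodule.finiteDimensional_of_le hVW)
  have hmem : (fun r => _root_.deriv f (r + 0)) ∈ V :=
    deriv_trans_mem hd hV (fun t => Submodule.subset_span ⟨t, rfl⟩) 0
  simp only [add_zero] at hmem
  have key : ∀ g ∈ V, g =O[atTop] fun r => Real.exp (s * r) := by
    intro g hg
    induction hg using Submodule.span_induction with
    | mem x hx =>
      obtain ⟨t, rfl⟩ := hx
      have h1 : (fun r => f (r + t)) =O[atTop] fun r => Real.exp (s * (r + t)) :=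
        hO.comp_tendsto (tendsto_atTop_add_const_right _ t tendsto_id)
      refine h1.trans ?_
      have : (fun r => Real.exp (s * (r + t))) = fun r => Real.exp (s * t) * Real.exp (s * r) := by
        funext r; rw [← Real.exp_add]; ring_nf
      rw [this]
      exact isBigO_const_mul_self _ _ _
    | zero => exact isBigO_zero _ _
    | add x y _ _ hx hy => exact hx.add hy
    | smul a x _ hx => exact hx.const_smul_left a
  exact key _ hmem

/-- Let `ρ > 0`, `C₀ > 0`, and let `P` be an exponential polynomial of
exponential degree `δ < 2ρ`. Set `A r = C₀ * exp (2ρr) + P r` and suppose `A` is positive on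
`[r₀, ∞)` for some `r₀ > 0`. Define
`G r = (1/4) * (A' r / A r)² + (1/2) * (A'/A)' r - ρ²`. Then there exist `α > 0`, `M > 0` and
`R ≥ r₀` with `|G r| ≤ M * exp (-αr)` for all `r ≥ R`; in particular `G` is bounded on
`[r₀, ∞)` and `∫_{r₀}^∞ r * |G r| dr < ∞`. -/
theorem condition_H4_holds
    (ρ C₀ : ℝ) (hρ : 0 < ρ) (hC₀ : 0 < C₀)
    (P : ℝ → ℝ) (δ : ℝ) (hP : IsExpPoly P) (hdeg : HasExpDegree P δ) (hδ : δ < 2 * ρ)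
    (A : ℝ → ℝ) (hA : ∀ r, A r = C₀ * Real.exp (2 * ρ * r) + P r)
    (r₀ : ℝ) (hr₀ : 0 < r₀) (hpos : ∀ r ≥ r₀, 0 < A r)
    (G : ℝ → ℝ)
    (hG : ∀ r, G r = (1 / 4) * (deriv A r / A r) ^ 2 +
      (1 / 2) * deriv (fun s => deriv A s / A s) r - ρ ^ 2) :
    (∃ α > (0 : ℝ), ∃ M > (0 : ℝ), ∃ R ≥ r₀, ∀ r ≥ R, |G r| ≤ M * Real.exp (-α * r)) ∧
    (∃ M : ℝ, ∀ r ≥ r₀, |G r| ≤ M) ∧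
    MeasureTheory.IntegrableOn (fun r => r * |G r|) (Set.Ici r₀) := by
  obtain ⟨s, hs1, hs2⟩ := exists_between hδ
  set ε := 2 * ρ - s with hε
  have hεpos : 0 < ε := by linarith
  have hft := hP.finTrans
  have hc3 := hP.contDiff 3
  have hc2 : ContDiff ℝ 2 (deriv P) :=
    ((contDiff_succ_iff_deriv (n := 2)).1 (by norm_num; exact_mod_cast hc3)).2.2
  have hc1 : ContDiff ℝ 1 (deriv (deriv P)) :=
    ((contDiff_succ_iff_deriv (n := 1)).1 (by norm_num; exact hc2)).2.2
  have hd0 : Differentiable ℝ P := hc3.differentiable (by norm_num)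
  have hd1 : Differentiable ℝ (deriv P) := hc2.differentiable (by norm_num)
  have O0 : P =O[atTop] fun r => Real.exp (s * r) := by
    have h := (hdeg.1 s hs1).isBigO_one ℝ
    have h2 := h.mul (isBigO_refl (fun r => Real.exp (s * r)) atTop)
    simpa [mul_assoc, ← Real.exp_add] using h2
  have O1 := hft.deriv_isBigO hd0 O0
  have O2 := (hft.deriv hd0).deriv_isBigO hd1 O1
  -- normalised quantities
  have norm_O : ∀ f : ℝ → ℝ, f =O[atTop] (fun r => Real.exp (s * r)) →
      (fun r => f r * Real.exp (-(2 * ρ * r))) =O[atTop] fun r => Real.exp (-ε * r) := by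
    intro f hf
    have h2 := hf.mul (isBigO_refl (fun r => Real.exp (-(2 * ρ * r))) atTop)
    refine h2.congr_right fun r => ?_
    rw [← Real.exp_add]
    congr 1
    rw [hε]; ring
  have N0 := norm_O _ O0
  have N1 := norm_O _ O1
  have N2 := norm_O _ O2
  set p0 : ℝ → ℝ := fun r => P r * Real.exp (-(2 * ρ * r)) with hp0
  set p1 : ℝ → ℝ := fun r => deriv P r * Real.exp (-(2 * ρ * r)) with hp1
  set p2 : ℝ → ℝ := fun r => deriv (deriv P) r * Real.exp (-(2 * ρ * r)) with hp2
  have E0 : Tendsto (fun r => Real.exp (-ε * r)) atTop (𝓝 0) := by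
    refine Real.tendsto_exp_atBot.comp ?_
    exact tendsto_id.const_mul_atTop_of_neg (by linarith)
  have T0 : Tendsto p0 atTop (𝓝 0) := N0.trans_tendsto E0
  have T1 : Tendsto p1 atTop (𝓝 0) := N1.trans_tendsto E0
  have T2 : Tendsto p2 atTop (𝓝 0) := N2.trans_tendsto E0
  -- derivatives of A
  have hexp : ∀ c r : ℝ, HasDerivAt (fun r => c * Real.exp (2 * ρ * r))
      (2 * ρ * c * Real.exp (2 * ρ * r)) r := by
    intro c r
    have h := (((hasDerivAt_id r).const_mul (2 * ρ)).exp).const_mul c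
    refine HasDerivAt.congr_deriv h ?_
    simp only [id, mul_one]; ring
  have hA' : A = fun r => C₀ * Real.exp (2 * ρ * r) + P r := funext hA
  have hAd : ∀ r, HasDerivAt A (2 * ρ * C₀ * Real.exp (2 * ρ * r) + deriv P r) r := by
    intro r
    rw [hA']
    exact (hexp C₀ r).add (hd0 r).hasDerivAt
  have hdA : deriv A = fun r => 2 * ρ * C₀ * Real.exp (2 * ρ * r) + deriv P r :=
    funext fun r => (hAd r).deriv
  have hAdd : ∀ r, HasDerivAt (deriv A)
      (2 * ρ * (2 * ρ * C₀) * Real.exp (2 * ρ * r) + deriv (deriv P) r) r := by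
    intro r
    rw [hdA]
    exact (hexp (2 * ρ * C₀) r).add (hd1 r).hasDerivAt
  have hddA : deriv (deriv A) = fun r =>
      2 * ρ * (2 * ρ * C₀) * Real.exp (2 * ρ * r) + deriv (deriv P) r :=
    funext fun r => (hAdd r).deriv
  have hGf : ∀ r ≥ r₀, G r = (1 / 4) * (deriv A r / A r) ^ 2 +
      (1 / 2) * ((deriv (deriv A) r * A r - deriv A r * deriv A r) / A r ^ 2) - ρ ^ 2 := by
    intro r hr
    rw [hG r]
    have h := ((hAdd r).div (hAd r) (hpos r hr).ne').deriv
    have h' : deriv (fun s => deriv A s / A s) r =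
      (deriv (deriv A) r * A r - deriv A r * deriv A r) / A r ^ 2 := by
      rw [← (hAdd r).deriv, ← (hAd r).deriv] at h
      exact h
    rw [h']
  have cA : Continuous A := continuous_iff_continuousAt.2 fun r => (hAd r).continuousAt
  have cA1 : Continuous (deriv A) := continuous_iff_continuousAt.2 fun r => (hAdd r).continuousAt
  have cA2 : Continuous (deriv (deriv A)) := by
    rw [hddA]
    have := hc1.continuous
    fun_prop
  have hGc : ContinuousOn G (Set.Ici r₀) := by
    refine ContinuousOn.congr ?_ hGf
    have hne : ∀ r ∈ Set.Ici r₀, A r ≠ 0 := fun r hr => (hpos r hr).ne'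
    have hne2 : ∀ r ∈ Set.Ici r₀, A r ^ 2 ≠ 0 := fun r hr => pow_ne_zero 2 (hne r hr)
    refine ContinuousOn.sub (ContinuousOn.add ?_ ?_) continuousOn_const
    · exact continuousOn_const.mul ((cA1.continuousOn.div cA.continuousOn hne).pow 2)
    · exact continuousOn_const.mul (ContinuousOn.div (by fun_prop) (by fun_prop) hne2)
  -- normal form of G
  have hGn : ∀ r ≥ r₀, G r =
      (p0 r * (2 * p2 r - 4 * ρ ^ 2 * p0 r) + p1 r * (-(4 * ρ * C₀) - p1 r)
        + p2 r * (2 * C₀)) * (4 * (C₀ + p0 r) ^ 2)⁻¹ := by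
    intro r hr
    have hE : Real.exp (2 * ρ * r) * Real.exp (-(2 * ρ * r)) = 1 := by
      rw [← Real.exp_add]; simp
    have hx : 0 < Real.exp (2 * ρ * r) := Real.exp_pos _
    have e0 : P r = p0 r * Real.exp (2 * ρ * r) := by
      simp only [hp0]; linear_combination (-P r) * hE
    have e1 : deriv P r = p1 r * Real.exp (2 * ρ * r) := by
      simp only [hp1]; linear_combination (-deriv P r) * hE
    have e2 : deriv (deriv P) r = p2 r * Real.exp (2 * ρ * r) := by
      simp only [hp2]; linear_combination (-deriv (deriv P) r) * hE
    have hAr : A r = (C₀ + p0 r) * Real.exp (2 * ρ * r) := by rw [hA, e0]; ring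
    have hA1r : deriv A r = (2 * ρ * C₀ + p1 r) * Real.exp (2 * ρ * r) := by
      rw [(hAd r).deriv, e1]; ring
    have hA2r : deriv (deriv A) r = (4 * ρ ^ 2 * C₀ + p2 r) * Real.exp (2 * ρ * r) := by
      rw [(hAdd r).deriv, e2]; ring
    have hne : C₀ + p0 r ≠ 0 := by
      intro h
      have := hpos r hr
      rw [hAr, h] at this
      simp at this
    rw [hGf r hr, hAr, hA1r, hA2r]
    generalize Real.exp (2 * ρ * r) = X at hx
    field_simp
    ring
  have hGO : G =O[atTop] fun r => Real.exp (-ε * r) := by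
    have b0 : (fun r => 2 * p2 r - 4 * ρ ^ 2 * p0 r) =O[atTop] fun _ => (1 : ℝ) :=
      ((T2.const_mul 2).sub (T0.const_mul (4 * ρ ^ 2))).isBigO_one ℝ
    have b1 : (fun r => -(4 * ρ * C₀) - p1 r) =O[atTop] fun _ => (1 : ℝ) :=
      (tendsto_const_nhds.sub T1).isBigO_one ℝ
    have b2 : (fun _ : ℝ => 2 * C₀) =O[atTop] fun _ => (1 : ℝ) :=
      (tendsto_const_nhds (x := 2 * C₀)).isBigO_one ℝ
    have b3 : (fun r => (4 * (C₀ + p0 r) ^ 2)⁻¹) =O[atTop] fun _ => (1 : ℝ) := by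
      have h : Tendsto (fun r => 4 * (C₀ + p0 r) ^ 2) atTop (𝓝 (4 * (C₀ + 0) ^ 2)) :=
        ((T0.const_add C₀).pow 2).const_mul 4
      exact (h.inv₀ (by positivity)).isBigO_one ℝ
    have hn := (((N0.mul b0).add (N1.mul b1)).add (N2.mul b2)).mul b3
    have hn' := hn.congr_right (g₂ := fun r => Real.exp (-ε * r)) (fun r => by ring)
    refine hn'.congr' ?_ EventuallyEq.rfl
    filter_upwards [eventually_ge_atTop r₀] with r hr
    exact (hGn r hr).symm
  have hfirst : ∃ α > (0 : ℝ), ∃ M > (0 : ℝ), ∃ R ≥ r₀, ∀ r ≥ R,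
      |G r| ≤ M * Real.exp (-α * r) := by
    obtain ⟨M, hM, hb⟩ := hGO.exists_pos
    obtain ⟨R, hR⟩ := eventually_atTop.1 hb.bound
    refine ⟨ε, hεpos, M, hM, max R r₀, le_max_right _ _, fun r hr => ?_⟩
    have := hR r (le_trans (le_max_left _ _) hr)
    simpa [Real.norm_eq_abs, abs_of_pos (Real.exp_pos _)] using this
  refine ⟨hfirst, ?_, ?_⟩
  · obtain ⟨α, hα, M, hM, R, hR, hb⟩ := hfirst
    obtain ⟨K, hK⟩ := (isCompact_Icc (a := r₀) (b := R)).exists_bound_of_continuousOn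
      (hGc.mono Set.Icc_subset_Ici_self)
    refine ⟨max K M, fun r hr => ?_⟩
    rcases le_total r R with h | h
    · exact (hK r ⟨hr, h⟩).trans (le_max_left _ _)
    · refine (hb r h).trans (le_trans ?_ (le_max_right _ _))
      have : Real.exp (-α * r) ≤ 1 := Real.exp_le_one_iff.2 (by nlinarith [le_trans hr₀.le hr])
      nlinarith
  · rw [integrableOn_Ici_iff_integrableOn_Ioi]
    refine integrable_of_isBigO_exp_neg (b := ε / 2) (half_pos hεpos)
      (continuousOn_id.mul hGc.abs) ?_
    have h1 : (fun r : ℝ => r) =O[atTop] fun r => Real.exp (ε / 2 * r) := by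
      simpa using (isLittleO_pow_exp_pos_mul_atTop 1 (half_pos hεpos)).isBigO
    have h2 := h1.mul hGO.abs_left
    refine h2.congr_right fun r => ?_
    rw [← Real.exp_add]
    ring_nf
end

section
/- Let (Z, d) be a metric space, μ a Borel probability measure on Z, ρ > 0, C > 0, and ξ ∈ Z a point such that d(ξ, η) ≤ 1 for all η ∈ Z and μ(B(ξ, ε)) ≤ C·ε^{2ρ} for all ε > 0, where B(ξ, ε) is the open ball of radius ε around ξ. For λ ∈ ℂ with Im λ < 0, define F(λ) = ∫_Z d(ξ, η)^{2(iλ − ρ)} dμ(η), where for t ∈ (0, 1] and z ∈ ℂ we set t^z = exp(z·log t), and 0^z := 0. Then F is well defined (the integrand is μ-integrable) and F is holomorphic on the open half-plane {λ ∈ ℂ : Im λ < 0}. -/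
open Filter Topology MeasureTheory Complex

/-- Negative powers of the distance with exponent less than the ball dimension are integrable. -/
lemma integrable_dist_rpow_neg
    {Z : Type*} [MetricSpace Z] [MeasurableSpace Z] [BorelSpace Z]
    (μ : Measure Z) [IsProbabilityMeasure μ] (ρ C : ℝ) (ξ : Z)
    (hball : ∀ ε > (0 : ℝ), μ (Metric.ball ξ ε) ≤ ENNReal.ofReal (C * ε ^ (2 * ρ)))
    (b : ℝ) (hb : 0 < b) (hbρ : b < 2 * ρ) :
    Integrable (fun η => dist ξ η ^ (-b)) μ := by
  have hm : Measurable (fun η => dist ξ η ^ (-b)) :=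
    (continuous_const.dist continuous_id).measurable.pow_const _
  refine ⟨hm.aestronglyMeasurable, ?_⟩
  rw [hasFiniteIntegral_iff_ofReal (Eventually.of_forall fun η => by positivity)]
  rw [lintegral_eq_lintegral_meas_lt μ (Eventually.of_forall fun η => by positivity)
    hm.aemeasurable]
  have hsplit : Set.Ioi (0 : ℝ) = Set.Ioc 0 1 ∪ Set.Ioi 1 :=
    (Set.Ioc_union_Ioi_eq_Ioi zero_le_one).symm
  rw [hsplit]
  refine (lintegral_union_le _ _ _).trans_lt (ENNReal.add_lt_top.2 ⟨?_, ?_⟩)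
  · calc _ ≤ ∫⁻ t in Set.Ioc (0 : ℝ) 1, 1 := lintegral_mono fun t => prob_le_one
      _ < ⊤ := by simp
  · have hexp : -(2 * ρ / b) < -1 := by
      rw [neg_lt_neg_iff, lt_div_iff₀ hb]; linarith
    have hint : IntegrableOn (fun t : ℝ => C * t ^ (-(2 * ρ / b))) (Set.Ioi 1) :=
      (integrableOn_Ioi_rpow_of_lt hexp one_pos).const_mul C
    refine lt_of_le_of_lt ?_ hint.lintegral_lt_top
    refine setLIntegral_mono' measurableSet_Ioi fun t ht => ?_
    have ht0 : (0 : ℝ) < t := one_pos.trans ht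
    have h1 : {a : Z | t < dist ξ a ^ (-b)} ⊆ Metric.ball ξ (t ^ (-(1 / b))) := by
      intro a ha
      simp only [Set.mem_ofPred_eq] at ha
      have hd : 0 < dist ξ a := by
        rcases (dist_nonneg (x := ξ) (y := a)).eq_or_lt with h | h
        · rw [← h, Real.zero_rpow (by linarith)] at ha
          linarith
        · exact h
      rw [Metric.mem_ball, dist_comm]
      have h2 := Real.rpow_lt_rpow_of_neg ht0 ha (z := -(1 / b))
        (neg_lt_zero.2 (by positivity))
      rwa [← Real.rpow_mul hd.le, show -b * -(1 / b) = 1 by field_simp, Real.rpow_one] at h2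
    refine (measure_mono h1).trans ((hball _ (by positivity)).trans_eq ?_)
    rw [← Real.rpow_mul ht0.le]
    congr 3
    ring

/-- Let `(Z, d)` be a metric space, `μ` a Borel probability measure on `Z`,
`ρ > 0`, `C > 0`, and `ξ ∈ Z` such that `d(ξ, η) ≤ 1` for all `η` and
`μ(B(ξ, ε)) ≤ C * ε^(2ρ)` for all `ε > 0`. For `λ ∈ ℂ` with `Im λ < 0`, define
`F(λ) = ∫ d(ξ, η)^(2(iλ - ρ)) dμ(η)`, with `t^z = exp (z log t)` for `t ∈ (0,1]` and
`0^z := 0`. Then the integrand is `μ`-integrable for every such `λ`, and `F` is holomorphic on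
the open half-plane `{λ : Im λ < 0}`. -/
theorem cFunction_integral_holomorphic
    {Z : Type*} [MetricSpace Z] [MeasurableSpace Z] [BorelSpace Z]
    (μ : Measure Z) [IsProbabilityMeasure μ]
    (ρ C : ℝ) (hρ : 0 < ρ) (hC : 0 < C) (ξ : Z)
    (hdiam : ∀ η, dist ξ η ≤ 1)
    (hball : ∀ ε > (0 : ℝ), μ (Metric.ball ξ ε) ≤ ENNReal.ofReal (C * ε ^ (2 * ρ))) :
    (∀ l : ℂ, l.im < 0 →
      Integrable (fun η => if dist ξ η = 0 then (0 : ℂ)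
        else (dist ξ η : ℂ) ^ (2 * (Complex.I * l - (ρ : ℂ)))) μ) ∧
    DifferentiableOn ℂ
      (fun l : ℂ => ∫ η, (if dist ξ η = 0 then (0 : ℂ)
        else (dist ξ η : ℂ) ^ (2 * (Complex.I * l - (ρ : ℂ)))) ∂μ)
      {l : ℂ | l.im < 0} := by
  have hre : ∀ l : ℂ, (2 * (Complex.I * l - (ρ : ℂ))).re = 2 * (-l.im - ρ) := by
    intro l; simp
  have hmeas : ∀ l : ℂ, Measurable (fun η => if dist ξ η = 0 then (0 : ℂ)
        else (dist ξ η : ℂ) ^ (2 * (Complex.I * l - (ρ : ℂ)))) := by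
    intro l
    have hd : Measurable (fun η => dist ξ η) := (continuous_const.dist continuous_id).measurable
    refine Measurable.ite (hd (measurableSet_singleton 0)) measurable_const ?_
    exact (Complex.measurable_ofReal.comp hd).pow_const _
  have hint : ∀ l : ℂ, l.im < 0 →
      Integrable (fun η => if dist ξ η = 0 then (0 : ℂ)
        else (dist ξ η : ℂ) ^ (2 * (Complex.I * l - (ρ : ℂ)))) μ := by
    intro l hl
    have hδ : 0 < min (-l.im) ρ := lt_min (by linarith) hρ
    have hδ1 := min_le_left (-l.im) ρ
    have hδ2 := min_le_right (-l.im) ρ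
    refine (integrable_dist_rpow_neg μ ρ C ξ hball (2 * ρ - min (-l.im) ρ)
      (by linarith) (by linarith)).mono' (hmeas l).aestronglyMeasurable
      (Eventually.of_forall fun η => ?_)
    split_ifs with h
    · rw [norm_zero]; positivity
    · have hd : 0 < dist ξ η := lt_of_le_of_ne dist_nonneg (Ne.symm h)
      rw [Complex.norm_cpow_eq_rpow_re_of_pos hd, hre]
      exact Real.rpow_le_rpow_of_exponent_ge hd (hdiam η) (by linarith)
  refine ⟨hint, fun l₀ hl₀ => ?_⟩
  have hl₀' : l₀.im < 0 := hl₀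
  obtain ⟨s, hs⟩ : ∃ s : ℝ, s = -l₀.im / 2 := ⟨_, rfl⟩
  have hs0 : 0 < s := by linarith
  have hδ : 0 < min s ρ := lt_min hs0 hρ
  have hδ1 := min_le_left s ρ
  have hδ2 := min_le_right s ρ
  have hU : {l : ℂ | l.im < -s} ∈ 𝓝 l₀ :=
    (isOpen_lt Complex.continuous_im continuous_const).mem_nhds
      (show l₀.im < -s by linarith)
  have key := hasDerivAt_integral_of_dominated_loc_of_deriv_le (μ := μ) (𝕜 := ℂ)
    (F := fun (l : ℂ) η => if dist ξ η = 0 then (0 : ℂ)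
        else (dist ξ η : ℂ) ^ (2 * (Complex.I * l - (ρ : ℂ))))
    (F' := fun (l : ℂ) η => (if dist ξ η = 0 then (0 : ℂ)
        else (dist ξ η : ℂ) ^ (2 * (Complex.I * l - (ρ : ℂ)))) *
          ((Real.log (dist ξ η) : ℂ) * (2 * Complex.I)))
    (bound := fun η => (2 / s) * dist ξ η ^ (-(2 * ρ - min s ρ)))
    hU (Eventually.of_forall fun l => (hmeas l).aestronglyMeasurable) (hint l₀ hl₀')
    ?_ ?_ ?_ ?_
  · exact key.2.differentiableAt.differentiableWithinAt
  · refine ((hmeas l₀).mul (Measurable.mul_const ?_ _)).aestronglyMeasurable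
    exact Complex.measurable_ofReal.comp
      (Real.measurable_log.comp (continuous_const.dist continuous_id).measurable)
  · refine Eventually.of_forall fun η l hl => ?_
    have hl' : l.im < -s := hl
    split_ifs with h
    · rw [zero_mul, norm_zero]; positivity
    · have hd : 0 < dist ξ η := lt_of_le_of_ne dist_nonneg (Ne.symm h)
      rw [norm_mul, norm_mul, norm_mul, Complex.norm_cpow_eq_rpow_re_of_pos hd, hre,
        Complex.norm_real, Complex.norm_I, Complex.norm_ofNat, Real.norm_eq_abs]
      have h1 := (Real.abs_log_mul_self_rpow_lt (dist ξ η) s hd (hdiam η) hs0).le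
      rw [abs_mul, abs_of_pos (Real.rpow_pos_of_pos hd s)] at h1
      have h2 : dist ξ η ^ (2 * (-l.im - ρ)) ≤
          dist ξ η ^ s * dist ξ η ^ (-(2 * ρ - min s ρ)) := by
        rw [← Real.rpow_add hd]
        exact Real.rpow_le_rpow_of_exponent_ge hd (hdiam η) (by linarith)
      calc _ ≤ (dist ξ η ^ s * dist ξ η ^ (-(2 * ρ - min s ρ))) *
              (|Real.log (dist ξ η)| * (2 * 1)) := by gcongr
        _ = 2 * (|Real.log (dist ξ η)| * dist ξ η ^ s) *
              dist ξ η ^ (-(2 * ρ - min s ρ)) := by ring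
        _ ≤ 2 * (1 / s) * dist ξ η ^ (-(2 * ρ - min s ρ)) := by gcongr
        _ = _ := by ring
  · exact (integrable_dist_rpow_neg μ ρ C ξ hball (2 * ρ - min s ρ)
      (by linarith) (by linarith)).const_mul _
  · refine Eventually.of_forall fun η l _ => ?_
    by_cases h : dist ξ η = 0
    · simp only [h, if_true, zero_mul]
      exact hasDerivAt_const _ _
    · simp only [h, if_false]
      have h1 : HasDerivAt (fun l : ℂ => 2 * (Complex.I * l - (ρ : ℂ))) (2 * Complex.I) l := by
        simpa using ((((hasDerivAt_id l).const_mul Complex.I).sub_const (ρ : ℂ)).const_mul 2)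
      have h2 := h1.const_cpow (c := (dist ξ η : ℂ)) (Or.inl (by exact_mod_cast h))
      rw [Complex.ofReal_log dist_nonneg]
      rw [← mul_assoc]
      exact h2
end
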